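/- arXiv:1901.01605 — 2 statements merged into one kernel-verified Lean document; each statement's English description precedes it below -/
import Mathlib

section
/- For all integers s ≥ 1 and k ≥ 1, FP(s,2k) = FP(s,2k-1) + 1. -/
/-!
For `≤`, append to an optimal functional `(2k-1)`-PIR code the sum of all its columns, so that the
columns of the new code sum to zero. If `2k-1` disjoint recovery sets each sum to `v`, then the
complement of their union sums to `-(2k-1) v = v` over `F_2`, and is one more recovery set
(`IsFunctionalPIR.exists_append`).

For `≥`, deleting one column of a code destroys at most one of the disjoint recovery sets of any
request (`IsFunctionalPIR.deleteLast`), and a functional `2k`-PIR code of positive dimension has a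
column to delete. Both minima are attained because `k` copies of the identity matrix form a
functional `k`-PIR code (`exists_isFunctionalPIR`).
-/

open scoped BigOperators

/-- `G` is a functional `k`-PIR code of dimension `s` and length `n`: for every nonzero
request `v : F_2^s` there are `k` pairwise disjoint sets of column indices, each of whose
columns sum to `v`. -/
def IsFunctionalPIR (s n k : ℕ) (G : Matrix (Fin s) (Fin n) (ZMod 2)) : Prop :=
  ∀ v : Fin s → ZMod 2, v ≠ 0 →
    ∃ R : Fin k → Finset (Fin n),
      (∀ j j' : Fin k, j ≠ j' → Disjoint (R j) (R j')) ∧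
      (∀ j : Fin k, ∀ i : Fin s, ∑ l ∈ R j, G i l = v i)

/-- `G` is a functional `k`-batch code of dimension `s` and length `n`: for every `k`-tuple of
nonzero requests there are `k` pairwise disjoint sets of column indices such that the columns
of the `j`-th set sum to the `j`-th request. -/
def IsFunctionalBatch (s n k : ℕ) (G : Matrix (Fin s) (Fin n) (ZMod 2)) : Prop :=
  ∀ v : Fin k → (Fin s → ZMod 2), (∀ j, v j ≠ 0) →
    ∃ R : Fin k → Finset (Fin n),
      (∀ j j' : Fin k, j ≠ j' → Disjoint (R j) (R j')) ∧
      (∀ j : Fin k, ∀ i : Fin s, ∑ l ∈ R j, G i l = v j i)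

/-- `FP s k` is the minimum length of a functional `k`-PIR code of dimension `s`. -/
noncomputable def FP (s k : ℕ) : ℕ :=
  sInf {n : ℕ | ∃ G : Matrix (Fin s) (Fin n) (ZMod 2), IsFunctionalPIR s n k G}

/-- `FB s k` is the minimum length of a functional `k`-batch code of dimension `s`. -/
noncomputable def FB (s k : ℕ) : ℕ :=
  sInf {n : ℕ | ∃ G : Matrix (Fin s) (Fin n) (ZMod 2), IsFunctionalBatch s n k G}

/-- `k` copies of the identity matrix, side by side: the `j`-th recovery set of `v` is the
support of `v` inside the `j`-th copy. -/
lemma exists_isFunctionalPIR (s k : ℕ) :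
    ∃ n, ∃ G : Matrix (Fin s) (Fin n) (ZMod 2), IsFunctionalPIR s n k G := by
  refine ⟨s * k, fun i l => if (finProdFinEquiv.symm l).1 = i then 1 else 0, fun v _ => ?_⟩
  refine ⟨fun j => Finset.univ.filter fun l =>
    v (finProdFinEquiv.symm l).1 = 1 ∧ (finProdFinEquiv.symm l).2 = j, ?_, ?_⟩
  · intro j j' hjj'
    rw [Finset.disjoint_left]
    intro l hl hl'
    simp only [Finset.mem_filter] at hl hl'
    exact hjj' (hl.2.2.symm.trans hl'.2.2)
  · intro j i
    rw [Finset.sum_filter, ← Equiv.sum_comp finProdFinEquiv, Fintype.sum_prod_type]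
    have h01 : ∀ x : ZMod 2, (if x = 1 then (1 : ZMod 2) else 0) = x := by decide
    simp only [Equiv.symm_apply_apply]
    rw [Finset.sum_eq_single i]
    · rw [Finset.sum_eq_single j]
      · simpa using h01 (v i)
      · intro b _ hb
        simp [hb]
      · simp
    · intro b _ hb
      simp [hb]
    · simp

lemma IsFunctionalPIR.deleteLast {s n k : ℕ} {G : Matrix (Fin s) (Fin (n + 1)) (ZMod 2)}
    (h : IsFunctionalPIR s (n + 1) (k + 1) G) :
    IsFunctionalPIR s n k (fun i l => G i l.castSucc) := by
  intro v hv
  obtain ⟨R, hd, hR⟩ := h v hv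
  obtain ⟨j₀, hj₀⟩ : ∃ j₀, ∀ j, j ≠ j₀ → Fin.last n ∉ R j := by
    by_cases hex : ∃ j₀, Fin.last n ∈ R j₀
    · obtain ⟨j₀, hj₀⟩ := hex
      exact ⟨j₀, fun j hj hl => Finset.disjoint_left.mp (hd j j₀ hj) hl hj₀⟩
    · exact ⟨0, fun j _ hl => hex ⟨j, hl⟩⟩
  refine ⟨fun t => (R (j₀.succAbove t)).preimage Fin.castSucc
    (Fin.castSucc_injective n).injOn, ?_, ?_⟩
  · intro t t' htt'
    rw [Finset.disjoint_left]
    intro l hl hl'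
    rw [Finset.mem_preimage] at hl hl'
    exact Finset.disjoint_left.mp
      (hd _ _ (fun e => htt' (Fin.succAbove_right_injective e))) hl hl'
  · intro t i
    rw [← hR (j₀.succAbove t) i]
    refine Finset.sum_preimage Fin.castSucc _ _ (fun l => G i l) ?_
    intro l hl hlr
    induction l using Fin.lastCases with
    | last => exact absurd hl (hj₀ _ (Fin.succAbove_ne j₀ t))
    | cast l => exact absurd ⟨l, rfl⟩ hlr

lemma IsFunctionalPIR.exists_append {s n m : ℕ} {G : Matrix (Fin s) (Fin n) (ZMod 2)}
    (h : IsFunctionalPIR s n (2 * m + 1) G) :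
    ∃ G' : Matrix (Fin s) (Fin (n + 1)) (ZMod 2),
      IsFunctionalPIR s (n + 1) (2 * m + 1 + 1) G' := by
  classical
  let G' : Matrix (Fin s) (Fin (n + 1)) (ZMod 2) :=
    fun i => Fin.snoc (α := fun _ => ZMod 2) (G i) (∑ l, G i l)
  have hzero : ∀ i, ∑ l, G' i l = 0 := by
    intro i
    simp [G', Fin.sum_univ_castSucc, CharTwo.add_self_eq_zero]
  refine ⟨G', fun v hv => ?_⟩
  obtain ⟨R, hd, hR⟩ := h v hv
  let S : Fin (2 * m + 1) → Finset (Fin (n + 1)) := fun j => (R j).map Fin.castSuccEmb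
  have hS : ∀ j j', j ≠ j' → Disjoint (S j) (S j') := fun j j' hjj' =>
    (Finset.disjoint_map _).mpr (hd j j' hjj')
  have hsum : ∀ j i, ∑ l ∈ S j, G' i l = v i := by
    intro j i
    simp [S, G', hR]
  let U : Finset (Fin (n + 1)) := Finset.univ.biUnion S
  have hdU : ∀ j, Disjoint (S j) Uᶜ := fun j =>
    disjoint_compl_right_iff.mpr (Finset.subset_biUnion_of_mem S (Finset.mem_univ j))
  -- An odd multiple of `v i` equals `v i` in characteristic two.
  have hU : ∀ i, ∑ l ∈ U, G' i l = v i := by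
    intro i
    rw [Finset.sum_biUnion fun j _ j' _ hjj' => hS j j' hjj']
    simp only [hsum, Finset.sum_const, Finset.card_univ, Fintype.card_fin]
    rw [add_smul, mul_smul, one_smul, two_nsmul, CharTwo.add_self_eq_zero, zero_add]
  refine ⟨Fin.snoc (α := fun _ => Finset (Fin (n + 1))) S Uᶜ, ?_, ?_⟩
  · intro j j' hjj'
    induction j using Fin.lastCases with
    | last =>
      induction j' using Fin.lastCases with
      | last => exact absurd rfl hjj'
      | cast j' => simpa only [Fin.snoc_last, Fin.snoc_castSucc] using (hdU j').symm
    | cast j =>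
      induction j' using Fin.lastCases with
      | last => simpa only [Fin.snoc_last, Fin.snoc_castSucc] using hdU j
      | cast j' =>
        simpa only [Fin.snoc_castSucc] using hS j j' fun e => hjj' (congrArg Fin.castSucc e)
  · intro j i
    induction j using Fin.lastCases with
    | last =>
      have hc := Finset.sum_add_sum_compl U (G' i)
      rw [hzero, hU, CharTwo.add_eq_zero] at hc
      simpa only [Fin.snoc_last] using hc.symm
    | cast j => simpa only [Fin.snoc_castSucc] using hsum j i

theorem FP_even_eq_odd_succ (s k : ℕ) (hs : 1 ≤ s) (hk : 1 ≤ k) :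
    FP s (2 * k) = FP s (2 * k - 1) + 1 := by
  obtain ⟨m, rfl⟩ := Nat.exists_eq_add_of_le' hk
  have e1 : 2 * (m + 1) - 1 = 2 * m + 1 := by omega
  have e2 : 2 * (m + 1) = 2 * m + 1 + 1 := by ring
  rw [e1, e2]
  apply le_antisymm
  · obtain ⟨G, hG⟩ := Nat.sInf_mem (exists_isFunctionalPIR s (2 * m + 1))
    exact Nat.sInf_le hG.exists_append
  · have hmem : ∃ G : Matrix (Fin s) (Fin (FP s (2 * m + 1 + 1))) (ZMod 2),
        IsFunctionalPIR s _ (2 * m + 1 + 1) G :=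
      Nat.sInf_mem (exists_isFunctionalPIR s (2 * m + 1 + 1))
    generalize FP s (2 * m + 1 + 1) = n at hmem ⊢
    obtain ⟨G, hG⟩ := hmem
    cases n with
    | zero =>
      -- With no columns, the all-ones request, nonzero because `1 ≤ s`, cannot be recovered.
      obtain ⟨R, -, hR⟩ := hG (fun _ => 1) fun h0 => one_ne_zero (congrFun h0 ⟨0, hs⟩)
      have h1 := hR 0 ⟨0, hs⟩
      rw [Finset.eq_empty_of_isEmpty (R 0), Finset.sum_empty] at h1
      exact absurd h1 zero_ne_one
    | succ n => exact Nat.succ_le_succ (Nat.sInf_le ⟨_, hG.deleteLast⟩)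
end

section
/- For every integer t ≥ 2: FP(2t,3) = 3t + 2, FP(2t,4) = 3t + 3, 3t + 3 ≤ FP(2t+1,3) ≤ 3t + 4, and 3t + 4 ≤ FP(2t+1,4) ≤ 3t + 5. -/
/-!
Upper bounds.  View `F_2^{2t}` as `(F_2^2)^t`.  As columns take `w` placed in block `i`, and `w`
repeated in all `t` blocks, for every block `i` and every nonzero `w : F_2^2`: there are
`3 (t + 1)` of them.  A request `v = (v_i)` is recovered, for each of the four `w : F_2^2`, by
repeating `w` in all blocks and correcting block `i` by `v_i + w`.  Distinct `w` use distinct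
columns, so this is a functional `4`-PIR code (`blockCode_isPIR`).  Dropping one row together with
a column that is a unit vector on that row gives dimension `2t - 1`, and deleting any column
turns a `(k + 1)`-PIR code into a `k`-PIR code (`IsFunctionalPIR.delete`).

Lower bounds.  Let `C` be the kernel of a functional `3`-PIR code of dimension `s` and length `n`,
so `|C| = 2^{n-s}`.  If `R_0, R_1, R_2` are disjoint recovery sets for `v ≠ 0`, then `R_0 ∪ R_1` and
`R_0 ∪ R_2` are codewords of `C` whose intersection is `R_0`.  This pair determines `v` and the
ordered triple, and there are six orderings, so `6 (2^s - 1) ≤ 4^{n-s}`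
(`six_mul_le_card_ker_sq`).  For `s ≥ 2` this forces `3 s + 2 < 2 n`.  The bounds for `k = 4`
follow by deleting a column.
-/

open scoped BigOperators

/-! ### Codes indexed by arbitrary types -/

/-- A functional PIR code whose rows, columns and recovery sets are indexed by arbitrary types
`σ`, `ι`, `κ`. -/
def IsPIR {σ ι : Type*} (κ : Type*) (G : σ → ι → ZMod 2) : Prop :=
  ∀ v : σ → ZMod 2, v ≠ 0 →
    ∃ R : κ → Finset ι,
      (∀ j j' : κ, j ≠ j' → Disjoint (R j) (R j')) ∧
      (∀ j : κ, ∀ i : σ, ∑ l ∈ R j, G i l = v i)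

/-- Passing to a subset of the rows and dropping columns that vanish on the rows kept preserves
the PIR property: extend a request by zero. With bijections this is reindexing. -/
lemma IsPIR.restrict {σ ι κ σ' ι' κ' : Type*} {G : σ → ι → ZMod 2} (hG : IsPIR κ G)
    (f : σ' → σ) (hf : f.Injective) (g : ι' → ι) (hg : g.Injective)
    (h : ∀ l, l ∉ Set.range g → ∀ i, G (f i) l = 0)
    (e : κ' → κ) (he : e.Injective) :
    IsPIR κ' (fun i l => G (f i) (g l)) := by
  classical
  intro v hv
  have hext : ∀ i, Function.extend f v 0 (f i) = v i := fun i => hf.extend_apply v 0 i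
  have hv' : Function.extend f v 0 ≠ 0 := by
    intro h0
    apply hv
    funext i
    rw [← hext i, h0]
    rfl
  obtain ⟨R, hd, hs⟩ := hG _ hv'
  refine ⟨fun j => (R (e j)).preimage g hg.injOn, fun j j' hjj => ?_, fun j i => ?_⟩
  · have := hd _ _ (he.ne hjj)
    rw [Finset.disjoint_left] at this ⊢
    intro a ha hb
    exact this (Finset.mem_preimage.1 ha) (Finset.mem_preimage.1 hb)
  · rw [Finset.sum_preimage g (R (e j)) hg.injOn (fun l => G (f i) l) (fun l _ hl => h l hl i),
      hs (e j) (f i), hext]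

lemma IsFunctionalPIR.delete {s n k : ℕ} {G : Matrix (Fin s) (Fin (n + 1)) (ZMod 2)}
    (hG : IsFunctionalPIR s (n + 1) (k + 1) G) :
    IsFunctionalPIR s n k (fun i l => G i (Fin.castSucc l)) := by
  intro v hv
  obtain ⟨R, hd, hs⟩ := hG v hv
  -- The deleted column lies in at most one recovery set, which is discarded.
  obtain ⟨j₀, hj₀⟩ : ∃ j₀, ∀ j, j ≠ j₀ → Fin.last n ∉ R j := by
    by_cases hx : ∃ j, Fin.last n ∈ R j
    · obtain ⟨j₀, h₀⟩ := hx
      exact ⟨j₀, fun j hj hm => Finset.disjoint_left.1 (hd j j₀ hj) hm h₀⟩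
    · push Not at hx
      exact ⟨0, fun j _ => hx j⟩
  have hinj := Fin.castSucc_injective n
  refine ⟨fun j => (R (j₀.succAbove j)).preimage Fin.castSucc hinj.injOn,
    fun j j' hjj => ?_, fun j i => ?_⟩
  · have := hd _ _ ((Fin.succAbove_right_injective (p := j₀)).ne hjj)
    rw [Finset.disjoint_left] at this ⊢
    intro a ha hb
    exact this (Finset.mem_preimage.1 ha) (Finset.mem_preimage.1 hb)
  · rw [Finset.sum_preimage Fin.castSucc _ hinj.injOn (fun l => G i l), hs]
    intro l hl hr
    exfalso
    induction l using Fin.lastCases with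
    | last => exact hj₀ _ (Fin.succAbove_ne j₀ j) hl
    | cast l => exact hr ⟨l, rfl⟩

/-! ### The block code -/

/-- The plane `F_2^2`. -/
abbrev Plane := Fin 2 → ZMod 2

/-- The code of dimension `2t` and length `3 (t + 1)` on `(F_2^2)^t`: column `(some i, w)` is `w`
placed in block `i`, and column `(none, w)` is `w` repeated in every block. -/
def blockCode (t : ℕ) : Fin t × Fin 2 → Option (Fin t) × {w : Plane // w ≠ 0} → ZMod 2 :=
  fun p q => match q.1 with
    | none => q.2.1 p.2
    | some j => if p.1 = j then q.2.1 p.2 else 0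

/-- Summing over the nonzero vectors equal to `x` gives `x`, also for `x = 0` when the sum is
empty. -/
lemma sum_nonzero_eq (x : Plane) (a : Fin 2) :
    ∑ u : {w : Plane // w ≠ 0}, (if u.1 = x then u.1 a else 0) = x a := by
  by_cases hx : x = 0
  · subst hx
    exact Finset.sum_eq_zero fun u _ => if_neg u.2
  · rw [Finset.sum_eq_single ⟨x, hx⟩]
    · simp
    · intro u _ hu
      exact if_neg fun h => hu (Subtype.ext h)
    · simp

lemma blockCode_isPIR (t : ℕ) : IsPIR Plane (blockCode t) := by
  intro v _
  let x : Plane → Option (Fin t) → Plane := fun w o =>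
    o.elim w (fun i a => v (i, a) + w a)
  refine ⟨fun w => Finset.univ.filter fun q => q.2.1 = x w q.1, fun w w' hw => ?_,
    fun w p => ?_⟩
  · rw [Finset.disjoint_left]
    rintro ⟨o, u⟩ h1 h2
    simp only [Finset.mem_filter, Finset.mem_univ, true_and] at h1 h2
    apply hw
    have h := h1.symm.trans h2
    cases o with
    | none => exact h
    | some i =>
      funext a
      exact add_left_cancel (congrFun h a)
  · obtain ⟨i, a⟩ := p
    rw [Finset.sum_filter, Fintype.sum_prod_type, Fintype.sum_option]
    have h1 : ∀ j : Fin t, ∑ u : {w : Plane // w ≠ 0},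
        (if u.1 = x w (some j) then blockCode t (i, a) (some j, u) else 0)
          = if i = j then v (j, a) + w a else 0 := by
      intro j
      by_cases hij : i = j
      · simp only [blockCode, hij, if_true]
        exact sum_nonzero_eq (x w (some j)) a
      · simp [blockCode, hij]
    have h2 : ∑ u : {w : Plane // w ≠ 0},
        (if u.1 = x w none then blockCode t (i, a) (none, u) else 0) = w a :=
      sum_nonzero_eq w a
    simp only [h1, h2, Finset.sum_ite_eq, Finset.mem_univ, if_true]
    rw [add_comm (v (i, a)), ← add_assoc, CharTwo.add_self_eq_zero, zero_add]

lemma card_blockCode_columns (t : ℕ) :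
    Fintype.card (Option (Fin t) × {w : Plane // w ≠ 0}) = 3 * t + 3 := by
  have : Fintype.card {w : Plane // w ≠ 0} = 3 := by decide
  rw [Fintype.card_prod, this, Fintype.card_option, Fintype.card_fin]
  ring

lemma exists_code_even (t : ℕ) :
    ∃ G : Matrix (Fin (2 * t)) (Fin (3 * t + 3)) (ZMod 2),
      IsFunctionalPIR (2 * t) (3 * t + 3) 4 G := by
  have e₁ : Fin (2 * t) ≃ Fin t × Fin 2 := Fintype.equivOfCardEq (by simp [mul_comm])
  have e₂ : Fin (3 * t + 3) ≃ Option (Fin t) × {w : Plane // w ≠ 0} :=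
    Fintype.equivOfCardEq (by rw [card_blockCode_columns, Fintype.card_fin])
  have e₃ : Fin 4 ≃ Plane := Fintype.equivOfCardEq (by simp)
  exact ⟨_, (blockCode_isPIR t).restrict e₁ e₁.injective e₂ e₂.injective
    (fun l hl => absurd (e₂.surjective l) hl) e₃ e₃.injective⟩

lemma exists_code_odd (t : ℕ) :
    ∃ G : Matrix (Fin (2 * t + 1)) (Fin (3 * t + 5)) (ZMod 2),
      IsFunctionalPIR (2 * t + 1) (3 * t + 5) 4 G := by
  have e₁ : Fin (2 * t + 1 + 1) ≃ Fin (t + 1) × Fin 2 :=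
    Fintype.equivOfCardEq (by simp; ring)
  have e₂ : Fin (3 * t + 5 + 1) ≃ Option (Fin (t + 1)) × {w : Plane // w ≠ 0} :=
    Fintype.equivOfCardEq (by rw [card_blockCode_columns, Fintype.card_fin]; ring)
  have e₃ : Fin 4 ≃ Plane := Fintype.equivOfCardEq (by simp)
  -- The column `c` is the unit vector on the row `(0, 0)`; both are dropped.
  let c : Option (Fin (t + 1)) × {w : Plane // w ≠ 0} :=
    (some 0, ⟨Pi.single 0 1, by decide⟩)
  refine ⟨_, (blockCode_isPIR (t + 1)).restrict
    (fun i => e₁ ((e₁.symm (0, 0)).succAbove i))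
    (e₁.injective.comp Fin.succAbove_right_injective)
    (fun l => e₂ ((e₂.symm c).succAbove l))
    (e₂.injective.comp Fin.succAbove_right_injective) ?_ e₃ e₃.injective⟩
  intro l hl i
  have hlc : l = c := by
    by_contra hne
    obtain ⟨z, hz⟩ := Fin.exists_succAbove_eq
      (show e₂.symm l ≠ e₂.symm c from fun h => hne (e₂.symm.injective h))
    exact hl ⟨z, by simp [hz]⟩
  have hrow : e₁ ((e₁.symm (0, 0)).succAbove i) ≠ (0, 0) := by
    intro h
    exact Fin.succAbove_ne _ i (e₁.eq_symm_apply.2 h)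
  subst hlc
  generalize e₁ ((e₁.symm (0, 0)).succAbove i) = p at hrow
  obtain ⟨b, a⟩ := p
  by_cases hb : b = 0
  · have ha : a ≠ 0 := fun ha => hrow (by rw [hb, ha])
    simp [blockCode, c, ha]
  · simp [blockCode, c, hb]

/-! ### Counting pairs of codewords -/

/-- The indicator vector of a set of columns. -/
def ind {n : ℕ} (S : Finset (Fin n)) : Fin n → ZMod 2 := fun l => if l ∈ S then 1 else 0

lemma ind_injective {n : ℕ} : (ind (n := n)).Injective := by
  intro S T h
  ext l
  have := congrFun h l
  by_cases h1 : l ∈ S <;> by_cases h2 : l ∈ T <;> simp_all [ind]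

lemma mulVec_ind {s n : ℕ} (G : Matrix (Fin s) (Fin n) (ZMod 2)) (S : Finset (Fin n))
    (i : Fin s) : G.mulVec (ind S) i = ∑ l ∈ S, G i l := by
  simp [Matrix.mulVec, dotProduct, ind]

lemma ind_add_mul_ind_add {n : ℕ} {A B C : Finset (Fin n)} (hAB : Disjoint A B)
    (hAC : Disjoint A C) (hBC : Disjoint B C) :
    (ind A + ind B) * (ind A + ind C) = ind A := by
  funext l
  rw [Finset.disjoint_left] at hAB hAC hBC
  have h1 := @hAB l
  have h2 := @hAC l
  have h3 := @hBC l
  by_cases hA : l ∈ A <;> by_cases hB : l ∈ B <;> by_cases hC : l ∈ C <;> simp_all [ind]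

lemma six_mul_le_card_ker_sq {s n : ℕ} {G : Matrix (Fin s) (Fin n) (ZMod 2)}
    (hG : IsFunctionalPIR s n 3 G) :
    6 * (2 ^ s - 1) ≤ Nat.card (LinearMap.ker G.mulVecLin) ^ 2 := by
  classical
  choose R hd hs using fun v : {v : Fin s → ZMod 2 // v ≠ 0} => hG v.1 v.2
  have hmul : ∀ v j, G.mulVec (ind (R v j)) = v.1 := by
    intro v j
    funext i
    rw [mulVec_ind, hs]
  have hRinj : ∀ v, (R v).Injective := by
    intro v j j' h
    by_contra hne
    have h0 := hd v j j' hne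
    rw [← h, disjoint_self] at h0
    apply v.2
    rw [← hmul v j, h0]
    funext i
    rw [mulVec_ind]
    simp
  have hker : ∀ v j j', ind (R v j) + ind (R v j') ∈ LinearMap.ker G.mulVecLin := by
    intro v j j'
    rw [LinearMap.mem_ker, Matrix.mulVecLin_apply, Matrix.mulVec_add, hmul, hmul]
    exact funext fun i => CharTwo.add_self_eq_zero _
  let F : {v : Fin s → ZMod 2 // v ≠ 0} × Equiv.Perm (Fin 3) →
      LinearMap.ker G.mulVecLin × LinearMap.ker G.mulVecLin := fun p =>
    (⟨_, hker p.1 (p.2 0) (p.2 1)⟩, ⟨_, hker p.1 (p.2 0) (p.2 2)⟩)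
  have hF : F.Injective := by
    rintro ⟨v, σ⟩ ⟨w, τ⟩ h
    have h1 : ind (R v (σ 0)) + ind (R v (σ 1)) = ind (R w (τ 0)) + ind (R w (τ 1)) :=
      congrArg (fun q => (q.1 : Fin n → ZMod 2)) h
    have h2 : ind (R v (σ 0)) + ind (R v (σ 2)) = ind (R w (τ 0)) + ind (R w (τ 2)) :=
      congrArg (fun q => (q.2 : Fin n → ZMod 2)) h
    have key : ∀ u (ρ : Equiv.Perm (Fin 3)),
        (ind (R u (ρ 0)) + ind (R u (ρ 1))) * (ind (R u (ρ 0)) + ind (R u (ρ 2)))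
          = ind (R u (ρ 0)) := fun u ρ =>
      ind_add_mul_ind_add (hd u _ _ (ρ.injective.ne (by decide)))
        (hd u _ _ (ρ.injective.ne (by decide))) (hd u _ _ (ρ.injective.ne (by decide)))
    have h0 : ind (R v (σ 0)) = ind (R w (τ 0)) := by rw [← key v σ, h1, h2, key w τ]
    have hvw : v = w := Subtype.ext (by rw [← hmul v (σ 0), h0, hmul])
    subst hvw
    rw [h0] at h1 h2
    have h0' := hRinj v (ind_injective h0)
    have h1' := hRinj v (ind_injective (add_left_cancel h1))
    have h2' := hRinj v (ind_injective (add_left_cancel h2))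
    refine Prod.ext rfl (Equiv.ext fun j => ?_)
    fin_cases j
    · exact h0'
    · exact h1'
    · exact h2'
  have hcard := Nat.card_le_card_of_injective F hF
  have hnz : Nat.card {v : Fin s → ZMod 2 // v ≠ 0} = 2 ^ s - 1 := by
    rw [Nat.card_eq_fintype_card, Fintype.card_subtype_compl]
    simp
  rw [Nat.card_prod, Nat.card_prod, hnz, Nat.card_eq_fintype_card (α := Equiv.Perm (Fin 3)),
    Fintype.card_perm, Fintype.card_fin] at hcard
  rw [sq, mul_comm]
  exact hcard

lemma card_ker_mul {s n : ℕ} {G : Matrix (Fin s) (Fin n) (ZMod 2)}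
    (hG : IsFunctionalPIR s n 3 G) :
    Nat.card (LinearMap.ker G.mulVecLin) * 2 ^ s = 2 ^ n := by
  have hsurj : LinearMap.range G.mulVecLin = ⊤ := by
    rw [LinearMap.range_eq_top]
    intro v
    by_cases hv : v = 0
    · exact ⟨0, by rw [hv, map_zero]⟩
    · obtain ⟨R, -, hs⟩ := hG v hv
      exact ⟨ind (R 0), funext fun i => by rw [Matrix.mulVecLin_apply, mulVec_ind, hs]⟩
  have h := LinearMap.finrank_range_add_finrank_ker G.mulVecLin
  rw [hsurj, finrank_top, Module.finrank_fin_fun, Module.finrank_fin_fun] at h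
  rw [Module.natCard_eq_pow_finrank (K := ZMod 2), Nat.card_zmod, ← pow_add, add_comm, h]

lemma length_bound {s n : ℕ} (hs : 2 ≤ s) {G : Matrix (Fin s) (Fin n) (ZMod 2)}
    (hG : IsFunctionalPIR s n 3 G) : 3 * s + 2 < 2 * n := by
  by_contra! hn
  have h1 := six_mul_le_card_ker_sq hG
  have h2 := card_ker_mul hG
  set c := Nat.card (LinearMap.ker G.mulVecLin)
  -- With `q = 2 ^ s`: `c ^ 2 * q ^ 2 = 2 ^ (2 n) ≤ 4 q ^ 3`, so `6 (q - 1) ≤ c ^ 2 ≤ 4 q`.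
  have hq : 2 ^ 2 ≤ 2 ^ s := Nat.pow_le_pow_right (by norm_num) hs
  have h3 : c ^ 2 * (2 ^ s) ^ 2 ≤ (4 * 2 ^ s) * (2 ^ s) ^ 2 := by
    calc c ^ 2 * (2 ^ s) ^ 2 = 2 ^ (2 * n) := by rw [← mul_pow, h2, ← pow_mul, mul_comm]
      _ ≤ 2 ^ (3 * s + 2) := Nat.pow_le_pow_right (by norm_num) hn
      _ = (4 * 2 ^ s) * (2 ^ s) ^ 2 := by ring
  have h4 : c ^ 2 ≤ 4 * 2 ^ s := Nat.le_of_mul_le_mul_right h3 (by positivity)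
  omega

/-! ### The values of `FP` -/

lemma length_bound_four {s n : ℕ} (hs : 2 ≤ s) {G : Matrix (Fin s) (Fin n) (ZMod 2)}
    (hG : IsFunctionalPIR s n 4 G) : 3 * s + 4 < 2 * n := by
  cases n with
  | zero =>
    -- A code of length zero would also be a `3`-PIR code, on its first three recovery sets.
    have hG3 : IsFunctionalPIR s 0 3 G := fun v hv => by
      obtain ⟨R, hd, hsum⟩ := hG v hv
      exact ⟨fun j => R j.castSucc,
        fun j j' h => hd _ _ ((Fin.castSucc_injective 3).ne h), fun j => hsum _⟩
    have := length_bound hs hG3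
    omega
  | succ n =>
    have := length_bound hs hG.delete
    omega

lemma FP_le {s n k : ℕ} (h : ∃ G : Matrix (Fin s) (Fin n) (ZMod 2), IsFunctionalPIR s n k G) :
    FP s k ≤ n :=
  Nat.sInf_le h

/-- The existence hypothesis excludes the value `0` that `sInf` takes on the empty set. -/
lemma FP_spec {s n k : ℕ}
    (h : ∃ G : Matrix (Fin s) (Fin n) (ZMod 2), IsFunctionalPIR s n k G) :
    ∃ G : Matrix (Fin s) (Fin (FP s k)) (ZMod 2), IsFunctionalPIR s (FP s k) k G :=
  Nat.sInf_mem (s := {n : ℕ | ∃ G : Matrix (Fin s) (Fin n) (ZMod 2), IsFunctionalPIR s n k G})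
    ⟨n, h⟩

theorem FP_three_four_exact (t : ℕ) (ht : 2 ≤ t) :
    FP (2 * t) 3 = 3 * t + 2 ∧
    FP (2 * t) 4 = 3 * t + 3 ∧
    (3 * t + 3 ≤ FP (2 * t + 1) 3 ∧ FP (2 * t + 1) 3 ≤ 3 * t + 4) ∧
    (3 * t + 4 ≤ FP (2 * t + 1) 4 ∧ FP (2 * t + 1) 4 ≤ 3 * t + 5) := by
  have e4 := exists_code_even t
  have o4 := exists_code_odd t
  have e3 : ∃ G : Matrix (Fin (2 * t)) (Fin (3 * t + 2)) (ZMod 2),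
      IsFunctionalPIR (2 * t) (3 * t + 2) 3 G := e4.elim fun _ hG => ⟨_, hG.delete⟩
  have o3 : ∃ G : Matrix (Fin (2 * t + 1)) (Fin (3 * t + 4)) (ZMod 2),
      IsFunctionalPIR (2 * t + 1) (3 * t + 4) 3 G := o4.elim fun _ hG => ⟨_, hG.delete⟩
  obtain ⟨_, he3⟩ := FP_spec e3
  obtain ⟨_, he4⟩ := FP_spec e4
  obtain ⟨_, ho3⟩ := FP_spec o3
  obtain ⟨_, ho4⟩ := FP_spec o4
  have le3 := length_bound (by omega) he3
  have le4 := length_bound_four (by omega) he4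
  have lo3 := length_bound (by omega) ho3
  have lo4 := length_bound_four (by omega) ho4
  have ue3 := FP_le e3
  have ue4 := FP_le e4
  have uo3 := FP_le o3
  have uo4 := FP_le o4
  omega
end
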